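/- Let C be a partition of R containing a singleton block {j} with j ∈ R_k, and containing another block c with c ∩ R_k = ∅; set n = |C|, let h_c = h(c) be the inclusion pattern of c, and let h' be h_c with its k-th entry changed from 0 to 1 (the inclusion pattern of c ∪ {j}). Let C' = (C \ {{j}, c}) ∪ {c ∪ {j}}. Then g(C')/g(C) = [P(n−1)/P(n)] · [(n−1+α₀)/n] · (n_{h'}(C) + α_{h'}) / [(n_{1_k}(C) − 1 + α_{1_k}) (n_{h_c}(C) − 1 + α_{h_c})], where 1_k ∈ H is the pattern with k-th entry 1 and all other entries 0. -/

import Mathlib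

/-- A partition of a finite set `S`: a collection of nonempty pairwise disjoint
subsets (blocks) of `S` whose union is `S`. -/
def IsPartitionOf {β : Type*} [DecidableEq β] (S : Finset β) (C : Finset (Finset β)) : Prop :=
  (∀ c ∈ C, c.Nonempty) ∧
  (∀ c ∈ C, ∀ c' ∈ C, c ≠ c' → Disjoint c c') ∧
  C.biUnion id = S

/-- The inclusion pattern of a block `c`: `h(c)_k = 1` iff `c ∩ R_k ≠ ∅`. -/
def patternOf {α : Type*} [DecidableEq α] {K : ℕ} (R : Fin K → Finset α)
    (c : Finset α) : Fin K → Bool := fun k => decide ((c ∩ R k) ≠ ∅)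

/-- `H = {0,1}^K \ {(0,…,0)}`, the set of nonzero inclusion patterns. -/
def Hset (K : ℕ) : Finset (Fin K → Bool) :=
  Finset.univ.filter (fun h => h ≠ fun _ => false)

/-- The inclusion pattern `1_k` with `k`-th entry `1` and all other entries `0`. -/
def onePat {K : ℕ} (k : Fin K) : Fin K → Bool := fun k' => decide (k' = k)

/-- The structured prior density
`g_R(C) = P(n(C)) · n(C)! · (Γ(α₀)/Γ(n(C)+α₀)) · ∏_{h∈H} Γ(n_h(C)+α_h)/Γ(α_h) ·
∏_k (1/|R_k|!) ∏_{c ∈ C, c ∩ R_k ≠ ∅} |c ∩ R_k|! p_k(|c ∩ R_k|)`. -/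
noncomputable def priorDensity {α : Type*} [DecidableEq α] {K : ℕ} (R : Fin K → Finset α)
    (P : ℕ → ℝ) (p : Fin K → ℕ → ℝ) (a : (Fin K → Bool) → ℝ)
    (C : Finset (Finset α)) : ℝ :=
  P C.card * (Nat.factorial C.card : ℝ) *
    (Real.Gamma (∑ h ∈ Hset K, a h) /
      Real.Gamma ((C.card : ℝ) + ∑ h ∈ Hset K, a h)) *
    (∏ h ∈ Hset K,
      Real.Gamma (((C.filter (fun c => patternOf R c = h)).card : ℝ) + a h) /
        Real.Gamma (a h)) *
    ∏ k, ((1 / (Nat.factorial (R k).card : ℝ)) *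
      ∏ c ∈ C.filter (fun c => (c ∩ R k) ≠ ∅),
        ((Nat.factorial (c ∩ R k).card : ℝ) * p k ((c ∩ R k).card)))

/-!
The density is a product of a factor depending only on the number of blocks, a factor depending
only on the pattern counts, and a factor multiplicative over pairs (file, block). Merging two
blocks that meet no common file leaves the last factor unchanged, since every trace `c ∩ R k` on a
file survives as it was. Their patterns are disjoint and nonzero, so these two patterns and their
supremum are distinct: each of the three counts changes by exactly one, and the functional equation
of `Γ` turns these changes into the stated rational factors.
-/

section Patterns

variable {α : Type*} [DecidableEq α] {K : ℕ} {R : Fin K → Finset α} {c d : Finset α}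

lemma mem_Hset {h : Fin K → Bool} : h ∈ Hset K ↔ h ≠ ⊥ := by
  rw [Hset, Finset.mem_filter_univ]
  rfl

lemma sup_onePat (h : Fin K → Bool) (k : Fin K) : h ⊔ onePat k = Function.update h k true := by
  funext k'
  by_cases hk : k' = k <;> simp [onePat, hk]

lemma disjoint_onePat {h : Fin K → Bool} {k : Fin K} : Disjoint h (onePat k) ↔ h k = false := by
  have hentry (k' : Fin K) : Disjoint (h k') (onePat k k') ↔ (k' = k → h k' = false) := by
    by_cases hk : k' = k <;> simp [onePat, hk, disjoint_iff]
  simp [Pi.disjoint_iff, hentry]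

lemma patternOf_eq_false {k : Fin K} : patternOf R c k = false ↔ c ∩ R k = ∅ := by
  simp [patternOf]

lemma patternOf_union (R : Fin K → Finset α) (c d : Finset α) :
    patternOf R (c ∪ d) = patternOf R c ⊔ patternOf R d := by
  funext k
  simp [patternOf, Finset.union_inter_distrib_right, Finset.union_eq_empty, imp_iff_not_or]

lemma disjoint_patternOf_iff :
    Disjoint (patternOf R c) (patternOf R d) ↔ ∀ k, c ∩ R k = ∅ ∨ d ∩ R k = ∅ := by
  simp only [← patternOf_eq_false, ← Bool.and_eq_false_iff]
  exact Pi.disjoint_iff.trans (forall_congr' fun _ => disjoint_iff)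

lemma patternOf_singleton_eq_onePat (hdisj : ∀ k k' : Fin K, k ≠ k' → Disjoint (R k) (R k'))
    {j : α} {k : Fin K} (hj : j ∈ R k) : patternOf R {j} = onePat k := by
  funext k'
  have hjk' : j ∈ R k' ↔ k' = k :=
    ⟨fun h => not_imp_comm.1 (hdisj k' k) (Finset.not_disjoint_iff.2 ⟨j, h, hj⟩), fun h => h ▸ hj⟩
  simp [patternOf, onePat, ← hjk', ← Finset.disjoint_iff_inter_eq_empty]

end Patterns

namespace IsPartitionOf

variable {α : Type*} [DecidableEq α] {C : Finset (Finset α)} {c d : Finset α}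

lemma patternOf_mem_Hset {K : ℕ} {R : Fin K → Finset α}
    (hC : IsPartitionOf (Finset.univ.biUnion R) C) (hc : c ∈ C) : patternOf R c ∈ Hset K := by
  obtain ⟨x, hx⟩ := hC.1 c hc
  have hxR : x ∈ Finset.univ.biUnion R := hC.2.2 ▸ Finset.mem_biUnion.2 ⟨c, hc, hx⟩
  obtain ⟨k, -, hk⟩ := Finset.mem_biUnion.1 hxR
  refine mem_Hset.2 fun h => ?_
  have hck : c ∩ R k = ∅ := patternOf_eq_false.1 (congrFun h k)
  exact Finset.notMem_empty x (hck ▸ Finset.mem_inter.2 ⟨hx, hk⟩)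

lemma union_notMem {S : Finset α} (hC : IsPartitionOf S C) (hc : c ∈ C) (hd : d ∈ C)
    (hcd : c ≠ d) : c ∪ d ∉ C := by
  obtain ⟨hne, hdisj, -⟩ := hC
  intro hu
  have hud : c ∪ d = d := by
    by_contra h
    exact (hne d hd).ne_empty
      ((hdisj _ hu d hd h).eq_bot_of_ge Finset.subset_union_right)
  exact (hne c hc).ne_empty
    ((hdisj c hc d hd hcd).eq_bot_of_le (Finset.union_eq_right.1 hud))

end IsPartitionOf

section Factors

variable {α : Type*} [DecidableEq α] {K : ℕ}

/-- The number `n_h(C)` of blocks of `C` with inclusion pattern `h`. -/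
def patternCount (R : Fin K → Finset α) (C : Finset (Finset α)) (h : Fin K → Bool) : ℕ :=
  (C.filter (fun c => patternOf R c = h)).card

/-- The factor `P(n) · n! · Γ(α₀)/Γ(n+α₀)` of the prior density that depends only on the number
`n` of blocks; `A` stands for `α₀`. -/
noncomputable def sizeFactor (P : ℕ → ℝ) (A : ℝ) (n : ℕ) : ℝ :=
  P n * (n.factorial : ℝ) * (Real.Gamma A / Real.Gamma (n + A))

/-- The Dirichlet-multinomial factor `∏_{h ∈ H} Γ(n_h(C)+α_h)/Γ(α_h)` of the prior density. -/
noncomputable def patternFactor (R : Fin K → Finset α) (a : (Fin K → Bool) → ℝ)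
    (C : Finset (Finset α)) : ℝ :=
  ∏ h ∈ Hset K, Real.Gamma (patternCount R C h + a h) / Real.Gamma (a h)

/-- The factor of the prior density that depends on the sizes of the traces `c ∩ R_k` of the
blocks on the files. -/
noncomputable def fileFactor (R : Fin K → Finset α) (p : Fin K → ℕ → ℝ)
    (C : Finset (Finset α)) : ℝ :=
  ∏ k, ((1 / ((R k).card.factorial : ℝ)) *
    ∏ c ∈ C.filter (fun c => (c ∩ R k) ≠ ∅), ((c ∩ R k).card.factorial : ℝ) * p k (c ∩ R k).card)

/-- The contribution of a single block to `fileFactor`. -/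
noncomputable def blockFactor (R : Fin K → Finset α) (p : Fin K → ℕ → ℝ) (c : Finset α) : ℝ :=
  ∏ k, if c ∩ R k ≠ ∅ then ((c ∩ R k).card.factorial : ℝ) * p k (c ∩ R k).card else 1

variable {R : Fin K → Finset α} {P : ℕ → ℝ} {p : Fin K → ℕ → ℝ} {a : (Fin K → Bool) → ℝ}
  {C D : Finset (Finset α)} {c d : Finset α}

lemma priorDensity_eq_mul (R : Fin K → Finset α) (P : ℕ → ℝ) (p : Fin K → ℕ → ℝ)
    (a : (Fin K → Bool) → ℝ) (C : Finset (Finset α)) :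
    priorDensity R P p a C =
      sizeFactor P (∑ h ∈ Hset K, a h) C.card * patternFactor R a C * fileFactor R p C :=
  rfl

lemma sizeFactor_pos {A : ℝ} {n : ℕ} (hP : 0 < P n) (hA : 0 < A) : 0 < sizeFactor P A n := by
  have hnA : 0 < n + A := by positivity
  exact mul_pos (mul_pos hP (by positivity))
    (div_pos (Real.Gamma_pos_of_pos hA) (Real.Gamma_pos_of_pos hnA))

lemma patternFactor_pos (R : Fin K → Finset α) (ha : ∀ h ∈ Hset K, 0 < a h)
    (C : Finset (Finset α)) : 0 < patternFactor R a C :=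
  Finset.prod_pos fun h hh =>
    div_pos (Real.Gamma_pos_of_pos (add_pos_of_nonneg_of_pos (Nat.cast_nonneg _) (ha h hh)))
      (Real.Gamma_pos_of_pos (ha h hh))

lemma fileFactor_pos (R : Fin K → Finset α) (hp : ∀ k m, 0 < p k m) (C : Finset (Finset α)) :
    0 < fileFactor R p C :=
  Finset.prod_pos fun k _ => mul_pos (by positivity) <|
    Finset.prod_pos fun _ _ => mul_pos (by positivity) (hp k _)

lemma priorDensity_pos (hH : (Hset K).Nonempty) (hP : ∀ m, 0 < P m) (hp : ∀ k m, 0 < p k m)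
    (ha : ∀ h ∈ Hset K, 0 < a h) : 0 < priorDensity R P p a C :=
  mul_pos (mul_pos (sizeFactor_pos (hP _) (Finset.sum_pos ha hH)) (patternFactor_pos R ha C))
    (fileFactor_pos R hp C)

lemma sizeFactor_pred_div_sizeFactor (P : ℕ → ℝ) {A : ℝ} (hA : 0 < A) {n : ℕ} (hn : n ≠ 0) :
    sizeFactor P A (n - 1) / sizeFactor P A n = P (n - 1) / P n * ((n - 1 + A) / n) := by
  obtain ⟨m, rfl⟩ := Nat.exists_eq_succ_of_ne_zero hn
  have hmA : 0 < m + A := by positivity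
  have hΓ : Real.Gamma ((m + 1 : ℕ) + A) = (m + A) * Real.Gamma (m + A) := by
    rw [← Real.Gamma_add_one hmA.ne']
    push_cast
    ring_nf
  have hΓA := (Real.Gamma_pos_of_pos hA).ne'
  have hΓmA := (Real.Gamma_pos_of_pos hmA).ne'
  simp only [sizeFactor, Nat.succ_eq_add_one, Nat.add_sub_cancel, hΓ, Nat.factorial_succ]
  push_cast
  field_simp
  ring

lemma patternCount_insert (R : Fin K → Finset α) (hc : c ∉ D) (h : Fin K → Bool) :
    patternCount R (insert c D) h = patternCount R D h + if patternOf R c = h then 1 else 0 := by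
  simp only [patternCount, Finset.filter_insert]
  split_ifs with hh
  · exact Finset.card_insert_of_notMem fun hmem => hc (Finset.mem_filter.1 hmem).1
  · rfl

lemma patternFactor_insert (hc : c ∉ D) (hcH : patternOf R c ∈ Hset K)
    (ha : 0 < a (patternOf R c)) :
    patternFactor R a (insert c D) =
      (patternCount R D (patternOf R c) + a (patternOf R c)) * patternFactor R a D := by
  unfold patternFactor
  rw [← Finset.mul_prod_erase _ _ hcH, ← Finset.mul_prod_erase (Hset K) _ hcH, ← mul_assoc]
  congr 1
  · have hpos : 0 < patternCount R D (patternOf R c) + a (patternOf R c) := by positivity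
    rw [patternCount_insert R hc, if_pos rfl, Nat.cast_add, Nat.cast_one, add_right_comm,
      Real.Gamma_add_one hpos.ne', mul_div_assoc]
  · refine Finset.prod_congr rfl fun h hh => ?_
    rw [patternCount_insert R hc, if_neg (Finset.ne_of_mem_erase hh).symm, add_zero]

lemma fileFactor_insert (R : Fin K → Finset α) (p : Fin K → ℕ → ℝ) (hc : c ∉ D) :
    fileFactor R p (insert c D) = blockFactor R p c * fileFactor R p D := by
  simp only [fileFactor, blockFactor, ← Finset.prod_mul_distrib, Finset.prod_filter,
    Finset.prod_insert hc, mul_left_comm]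

lemma blockFactor_union (p : Fin K → ℕ → ℝ)
    (hcd : Disjoint (patternOf R c) (patternOf R d)) :
    blockFactor R p (c ∪ d) = blockFactor R p c * blockFactor R p d := by
  simp only [blockFactor, ← Finset.prod_mul_distrib, Finset.union_inter_distrib_right]
  refine Finset.prod_congr rfl fun k _ => ?_
  rcases disjoint_patternOf_iff.1 hcd k with h | h <;> simp [h]

end Factors

section Merge

variable {α : Type*} [DecidableEq α] {K : ℕ} {R : Fin K → Finset α} {a : (Fin K → Bool) → ℝ}
  {D : Finset (Finset α)} {c d : Finset α}

lemma fileFactor_insert_union (p : Fin K → ℕ → ℝ)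
    (hcd : Disjoint (patternOf R c) (patternOf R d)) (hu : c ∪ d ∉ D) (hc : c ∉ D)
    (hd : d ∉ insert c D) :
    fileFactor R p (insert (c ∪ d) D) = fileFactor R p (insert d (insert c D)) := by
  rw [fileFactor_insert R p hu, fileFactor_insert R p hd, fileFactor_insert R p hc,
    blockFactor_union p hcd, mul_comm (blockFactor R p c), mul_assoc]

lemma patternFactor_insert_union_div (ha : ∀ h ∈ Hset K, 0 < a h)
    (hcH : patternOf R c ∈ Hset K) (hdH : patternOf R d ∈ Hset K)
    (hcd : Disjoint (patternOf R c) (patternOf R d)) (hu : c ∪ d ∉ D) (hc : c ∉ D)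
    (hd : d ∉ insert c D) {C : Finset (Finset α)} (hC : C = insert d (insert c D)) :
    patternFactor R a (insert (c ∪ d) D) / patternFactor R a C =
      (patternCount R C (patternOf R (c ∪ d)) + a (patternOf R (c ∪ d))) /
        ((patternCount R C (patternOf R d) - 1 + a (patternOf R d)) *
          (patternCount R C (patternOf R c) - 1 + a (patternOf R c))) := by
  have hc₀ := mem_Hset.1 hcH
  have hd₀ := mem_Hset.1 hdH
  have hne : patternOf R c ≠ patternOf R d := hcd.ne hc₀
  have hcu : patternOf R c ≠ patternOf R (c ∪ d) := fun h =>
    hd₀ (hcd.eq_bot_of_ge (left_eq_sup.1 (h.trans (patternOf_union R c d))))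
  have hdu : patternOf R d ≠ patternOf R (c ∪ d) := fun h =>
    hc₀ (hcd.eq_bot_of_le (right_eq_sup.1 (h.trans (patternOf_union R c d))))
  have huH : patternOf R (c ∪ d) ∈ Hset K := mem_Hset.2 fun h =>
    hc₀ (sup_eq_bot_iff.1 (patternOf_union R c d ▸ h)).1
  subst hC
  rw [patternFactor_insert hu huH (ha _ huH), patternFactor_insert hd hdH (ha _ hdH),
    patternFactor_insert hc hcH (ha _ hcH), ← mul_assoc,
    mul_div_mul_right _ _ (patternFactor_pos R ha D).ne']
  simp [patternCount_insert R hd, patternCount_insert R hc, hne, hne.symm, hcu, hdu]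

theorem prior_ratio_merge_into_nonsharing_block_general {P : ℕ → ℝ} {p : Fin K → ℕ → ℝ}
    (ha : ∀ h ∈ Hset K, 0 < a h) {C : Finset (Finset α)} (hg : priorDensity R P p a C ≠ 0)
    (hc : c ∈ C) (hd : d ∈ C) (hu : c ∪ d ∉ C)
    (hcH : patternOf R c ∈ Hset K) (hdH : patternOf R d ∈ Hset K)
    (hcd : Disjoint (patternOf R c) (patternOf R d)) :
    priorDensity R P p a ((C \ {d, c}) ∪ {c ∪ d}) / priorDensity R P p a C =
      (P (C.card - 1) / P C.card) *
        (((C.card : ℝ) - 1 + ∑ h ∈ Hset K, a h) / (C.card : ℝ)) *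
        ((patternCount R C (patternOf R (c ∪ d)) + a (patternOf R (c ∪ d))) /
          ((patternCount R C (patternOf R d) - 1 + a (patternOf R d)) *
            (patternCount R C (patternOf R c) - 1 + a (patternOf R c)))) := by
  set D := C \ {d, c} with hD
  have hne : d ≠ c := fun h => hcd.ne (mem_Hset.1 hcH) (h ▸ rfl)
  have hcD : c ∉ D := by simp [hD]
  have hdD : d ∉ insert c D := by simp [hD, hne]
  have huD : c ∪ d ∉ D := fun h => hu (Finset.sdiff_subset h)
  have hCD : C = insert d (insert c D) := by grind
  have hcard : (insert (c ∪ d) D).card = C.card - 1 := by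
    rw [hCD, Finset.card_insert_of_notMem huD, Finset.card_insert_of_notMem hdD,
      Finset.card_insert_of_notMem hcD, Nat.add_sub_cancel]
  have hfile : fileFactor R p (insert (c ∪ d) D) = fileFactor R p C :=
    (fileFactor_insert_union p hcd huD hcD hdD).trans (congrArg _ hCD.symm)
  rw [Finset.union_singleton]
  simp only [priorDensity_eq_mul] at hg ⊢
  rw [mul_div_mul_comm, mul_div_mul_comm, hfile, div_self (right_ne_zero_of_mul hg), mul_one, hcard,
    sizeFactor_pred_div_sizeFactor P (Finset.sum_pos ha ⟨_, hcH⟩) (Finset.card_ne_zero_of_mem hc),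
    patternFactor_insert_union_div ha hcH hdH hcd huD hcD hdD hCD]

end Merge

/-- Merging a singleton block `{j}` (with `j ∈ R_k`) into another block `c` with
`c ∩ R_k = ∅`: writing `n = |C|`, `h_c` for the inclusion pattern of `c` and `h'` for
`h_c` with its `k`-th entry changed to `1` (the pattern of `c ∪ {j}`), the ratio of
structured prior densities is `g(C')/g(C) = [P(n-1)/P(n)] · [(n-1+α₀)/n] ·
(n_{h'}(C)+α_{h'}) / [(n_{1_k}(C)-1+α_{1_k})(n_{h_c}(C)-1+α_{h_c})]`. -/
theorem prior_ratio_merge_into_nonsharing_block {α : Type*} [DecidableEq α] {K : ℕ}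
    (hK : 1 ≤ K) (R : Fin K → Finset α)
    (hne : ∀ k, (R k).Nonempty)
    (hdisj : ∀ k k' : Fin K, k ≠ k' → Disjoint (R k) (R k'))
    (P : ℕ → ℝ) (hP : ∀ m, 0 < P m)
    (p : Fin K → ℕ → ℝ) (hp : ∀ k m, 0 < p k m)
    (a : (Fin K → Bool) → ℝ) (ha : ∀ h ∈ Hset K, 0 < a h)
    (C : Finset (Finset α)) (hC : IsPartitionOf (Finset.univ.biUnion R) C)
    (j : α) (k : Fin K) (hj : j ∈ R k) (hjC : {j} ∈ C)
    (c : Finset α) (hc : c ∈ C) (hck : (c ∩ R k) = ∅) :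
    priorDensity R P p a ((C \ {{j}, c}) ∪ {c ∪ {j}}) / priorDensity R P p a C =
      (P (C.card - 1) / P C.card) *
        (((C.card : ℝ) - 1 + ∑ h ∈ Hset K, a h) / (C.card : ℝ)) *
        ((((C.filter (fun c' =>
              patternOf R c' = Function.update (patternOf R c) k true)).card : ℝ) +
            a (Function.update (patternOf R c) k true)) /
          (((((C.filter (fun c' => patternOf R c' = onePat k)).card : ℝ) - 1 +
              a (onePat k))) *
            (((C.filter (fun c' => patternOf R c' = patternOf R c)).card : ℝ) - 1 +
              a (patternOf R c)))) := by
  have hj_pat : patternOf R {j} = onePat k := patternOf_singleton_eq_onePat hdisj hj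
  have hu_pat : patternOf R (c ∪ {j}) = Function.update (patternOf R c) k true := by
    rw [patternOf_union, hj_pat, sup_onePat]
  have hcH := hC.patternOf_mem_Hset hc
  have hjH := hC.patternOf_mem_Hset hjC
  have hcd : Disjoint (patternOf R c) (patternOf R {j}) :=
    hj_pat ▸ disjoint_onePat.2 (patternOf_eq_false.2 hck)
  have hu : c ∪ {j} ∉ C := hC.union_notMem hc hjC fun h => hcd.ne (mem_Hset.1 hcH) (h ▸ rfl)
  have hg := (priorDensity_pos (R := R) (C := C) ⟨_, hcH⟩ hP hp ha).ne'
  rw [← hu_pat, ← hj_pat]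
  exact prior_ratio_merge_into_nonsharing_block_general ha hg hc hjC hu hcH hjH hcd
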